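/- Suppose B^0_j > 0 for all j and that (v^1, B^1) satisfies the conservative fully discrete multiplicative Su–Olson scheme: v^1_{jk} = v^0_{jk} − Δt Σ_{i,ℓ} (1/B^0_j) D^x_{ji} B^0_i v^0_{iℓ} A_{kℓ} + Δt Σ_{i,ℓ} (1/B^0_j) D^{xx}_{ji} B^0_i v^0_{iℓ} |A|_{kℓ} + σΔt (B^1_j/B^0_j)(√2 δ_{k0} − v^1_{jk}) − ((B^1_j − B^0_j)/B^0_j) v^1_{jk} for all j, k, together with B^1_j = B^0_j + σΔt B^1_j(√2 v^1_{j0} − 2) for all j. If 0 < Δt ≤ Δx and σ ≥ 0, then the scheme is energy stable: E^1 ≤ E^0, where E^n = (1/2) Σ_{j,k} (B^n_j v^n_{jk})² + (1/2) Σ_j (B^n_j)². -/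

import Mathlib

/-!
In the variable `u = B v` the scheme, multiplied by `B⁰`, splits into a transport step
`u⁰ ↦ w` followed by an implicit pointwise absorption/emission step `(w, B⁰) ↦ (u¹, B¹)`.

* Absorption (`absorption_zero`, `absorption_pos`): testing the implicit step with `(u¹, B¹)` gives
  the dissipation `-σΔt (u¹₀ - √2 B¹)² - σΔt ∑_{k ≠ 0} (u¹ₖ)²`, so `‖u¹‖² + ‖B¹‖² ≤ ‖w‖² + ‖B⁰‖²`.
* Transport (`transport_pointwise`): with `c = Δt/Δx`, the upwind form is
  `w_j = (1 - c|A|) u_j + (c/2)(|A| - A) u_{j+1} + (c/2)(|A| + A) u_{j-1}`.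
  The three matrices are positive semidefinite and sum to the identity, hence `|w_j|²` is at most the
  sum of the corresponding quadratic forms, and summing over the periodic grid gives `‖w‖ ≤ ‖u⁰‖`.

Positivity of `|A| ± A` follows from `|A| ≥ 0` and `|A|² = A²` (`posSemidef_sub_of_sq_eq`), and that of
`1 - |A|` from the spectral bound on `A` (`posSemidef_one_sub`).
-/

open Finset

/-- The periodic centered-difference stencil matrix `D^x` with
`D^x_{j,j+1} = 1/(2Δx)`, `D^x_{j,j-1} = -1/(2Δx)` (indices cyclic). -/
noncomputable def Dx (Nx : ℕ) [NeZero Nx] (Δx : ℝ) : Matrix (Fin Nx) (Fin Nx) ℝ :=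
  Matrix.of fun j i =>
    if i = j + 1 then 1 / (2 * Δx)
    else if j = i + 1 then -(1 / (2 * Δx))
    else 0

/-- The periodic second-difference stabilization matrix `D^{xx}` with
`D^{xx}_{j,j} = -1/Δx`, `D^{xx}_{j,j±1} = 1/(2Δx)` (indices cyclic). -/
noncomputable def Dxx (Nx : ℕ) [NeZero Nx] (Δx : ℝ) : Matrix (Fin Nx) (Fin Nx) ℝ :=
  Matrix.of fun j i =>
    if i = j then -(1 / Δx)
    else if i = j + 1 then 1 / (2 * Δx)
    else if j = i + 1 then 1 / (2 * Δx)
    else 0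

open Matrix

lemma posSemidef_of_eigen {n : ℕ} {M : Matrix (Fin n) (Fin n) ℝ} (hM : M.IsHermitian)
    (h : ∀ (l : ℝ) (x : Fin n → ℝ), x ≠ 0 → M *ᵥ x = l • x → 0 ≤ l) : M.PosSemidef := by
  rw [hM.posSemidef_iff_eigenvalues_nonneg]
  intro i
  refine h (hM.eigenvalues i) (hM.eigenvectorBasis i).ofLp ?_ (hM.mulVec_eigenvectorBasis i)
  intro h0
  exact hM.eigenvectorBasis.orthonormal.ne_zero i (by ext k; exact congrFun h0 k)

lemma dot_mulVec_comm {n : ℕ} {M : Matrix (Fin n) (Fin n) ℝ} (hM : M.IsSymm)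
    (x y : Fin n → ℝ) : x ⬝ᵥ M *ᵥ y = y ⬝ᵥ M *ᵥ x := by
  rw [Matrix.dotProduct_mulVec, ← Matrix.mulVec_transpose, hM.eq, dotProduct_comm]

lemma isSymm_of_posSemidef {n : ℕ} {M : Matrix (Fin n) (Fin n) ℝ} (hM : M.PosSemidef) :
    M.IsSymm := by
  have := hM.isHermitian
  rwa [Matrix.IsHermitian, Matrix.conjTranspose_eq_transpose_of_trivial] at this

lemma quad_nonneg {n : ℕ} {M : Matrix (Fin n) (Fin n) ℝ} (hM : M.PosSemidef)
    (x : Fin n → ℝ) : 0 ≤ x ⬝ᵥ M *ᵥ x := by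
  simpa using hM.dotProduct_mulVec_nonneg x

/-- If `S ≥ 0` and `S² = A²`, then `A ≤ S`. For an eigenvector `x` of `S - A` with eigenvalue
`l < 0`, the identity `(S - A)(S + A) + (S + A)(S - A) = 2 (S² - A²) = 0` gives
`l ⟨x, (S + A) x⟩ = 0`, so that `2 ⟨x, S x⟩ = l |x|² < 0`. -/
lemma posSemidef_sub_of_sq_eq {n : ℕ} {A S : Matrix (Fin n) (Fin n) ℝ} (hA : A.IsSymm)
    (hS : S.PosSemidef) (h2 : S * S = A * A) : (S - A).PosSemidef := by
  have hSs := isSymm_of_posSemidef hS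
  refine posSemidef_of_eigen ?_ ?_
  · rw [Matrix.IsHermitian, Matrix.conjTranspose_eq_transpose_of_trivial]
    exact hSs.sub hA
  intro l x hx hl
  by_contra! hneg
  have hxx : 0 < x ⬝ᵥ x := by
    simpa using (Matrix.dotProduct_star_self_pos_iff (v := x)).2 hx
  have hSx : S *ᵥ x = A *ᵥ x + l • x := by
    rw [← hl, Matrix.sub_mulVec]; abel
  -- `|S x|² = |A x|²`
  have e : (S *ᵥ x) ⬝ᵥ (S *ᵥ x) = (A *ᵥ x) ⬝ᵥ (A *ᵥ x) := by
    rw [dot_mulVec_comm hSs, dot_mulVec_comm hA, Matrix.mulVec_mulVec, Matrix.mulVec_mulVec, h2]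
  have hq := quad_nonneg hS x
  have hq' : x ⬝ᵥ S *ᵥ x = x ⬝ᵥ A *ᵥ x + l * (x ⬝ᵥ x) := by
    rw [hSx]; simp [dotProduct_add]
  rw [hSx] at e
  simp only [dotProduct_add, add_dotProduct, dotProduct_smul, smul_dotProduct, smul_eq_mul] at e
  rw [dotProduct_comm (A *ᵥ x) x] at e
  have h3 : l * (2 * (x ⬝ᵥ A *ᵥ x) + l * (x ⬝ᵥ x)) = 0 := by linarith
  rcases mul_eq_zero.1 h3 with h | h
  · linarith
  · nlinarith [mul_pos (neg_pos.2 hneg) hxx]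

lemma mem_spectrum_of_mulVec {n : ℕ} {A : Matrix (Fin n) (Fin n) ℝ} {l : ℝ} {x : Fin n → ℝ}
    (hx : x ≠ 0) (h : A *ᵥ x = l • x) : l ∈ spectrum ℝ A := by
  rw [← Matrix.spectrum_toLin']
  refine Module.End.HasEigenvalue.mem_spectrum
    (Module.End.hasEigenvalue_of_hasEigenvector (x := x) ⟨?_, hx⟩)
  rw [Module.End.mem_eigenspace_iff]
  simpa using h

/-- An eigenvalue `m` of `S` satisfies `(A - m)(A + m) x = 0`, so `m` or `-m` is an eigenvalue
of `A`, whence `m ≤ 1`. -/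
lemma posSemidef_one_sub {n : ℕ} {A S : Matrix (Fin n) (Fin n) ℝ}
    (hspec : ∀ μ ∈ spectrum ℝ A, μ ∈ Set.Icc (-1 : ℝ) 1)
    (hS : S.PosSemidef) (h2 : S * S = A * A) : (1 - S).PosSemidef := by
  refine posSemidef_of_eigen (Matrix.isHermitian_one.sub hS.isHermitian) ?_
  intro l x hx hl
  have hSx : S *ᵥ x = (1 - l) • x := by
    rw [Matrix.sub_mulVec, Matrix.one_mulVec] at hl
    rw [sub_smul, one_smul, ← hl]; abel
  have hAA : A *ᵥ (A *ᵥ x) = (1 - l) • ((1 - l) • x) := by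
    rw [Matrix.mulVec_mulVec, ← h2, ← Matrix.mulVec_mulVec, hSx, Matrix.mulVec_smul, hSx]
  by_cases hy : A *ᵥ x + (1 - l) • x = 0
  · have := (hspec _ (mem_spectrum_of_mulVec (l := -(1 - l)) hx
      (by rw [neg_smul]; exact eq_neg_of_add_eq_zero_left hy))).1
    linarith
  · have := (hspec _ (mem_spectrum_of_mulVec (l := 1 - l) hy
      (by rw [Matrix.mulVec_add, Matrix.mulVec_smul, hAA, smul_add, add_comm]))).2
    linarith

/-- Pointwise estimate for the upwind step, with `p`, `m` the values in the right and left
neighbouring cells: each of the positive semidefinite matrices `M` in the upwind form contributes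
`2 ⟨w, M y⟩ ≤ ⟨w, M w⟩ + ⟨y, M y⟩`, and the terms `⟨w, M w⟩` add up to `|w|²`. -/
lemma transport_pointwise {n : ℕ} {A S : Matrix (Fin n) (Fin n) ℝ} (hA : A.IsSymm)
    (hspec : ∀ μ ∈ spectrum ℝ A, μ ∈ Set.Icc (-1 : ℝ) 1)
    (hS : S.PosSemidef) (h2 : S * S = A * A) {c : ℝ} (hc : 0 ≤ c) (hc1 : c ≤ 1)
    (u p m w : Fin n → ℝ)
    (hw : w = u - (c / 2) • (A *ᵥ p - A *ᵥ m)
      + (c / 2) • (S *ᵥ p - (2 : ℝ) • S *ᵥ u + S *ᵥ m)) :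
    w ⬝ᵥ w ≤ u ⬝ᵥ u - c * (u ⬝ᵥ S *ᵥ u) + c / 2 * (p ⬝ᵥ S *ᵥ p - p ⬝ᵥ A *ᵥ p)
      + c / 2 * (m ⬝ᵥ S *ᵥ m + m ⬝ᵥ A *ᵥ m) := by
  have hSs := isSymm_of_posSemidef hS
  have e : w ⬝ᵥ w = w ⬝ᵥ u - c / 2 * (w ⬝ᵥ A *ᵥ p - w ⬝ᵥ A *ᵥ m)
      + c / 2 * (w ⬝ᵥ S *ᵥ p - 2 * (w ⬝ᵥ S *ᵥ u) + w ⬝ᵥ S *ᵥ m) := by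
    nth_rewrite 2 [hw]
    simp only [dotProduct_add, dotProduct_sub, dotProduct_smul, smul_eq_mul]
  have q0 := quad_nonneg hS (w - u)
  have q1 := quad_nonneg (posSemidef_one_sub hspec hS h2) (w - u)
  have q2 := quad_nonneg (posSemidef_sub_of_sq_eq hA hS h2) (w - p)
  have q3 := quad_nonneg (posSemidef_sub_of_sq_eq (A := -A) hA.neg hS (by simpa using h2)) (w - m)
  have q4 := add_nonneg q1 (mul_nonneg (sub_nonneg.2 hc1) q0)
  replace q2 := mul_nonneg hc q2
  replace q3 := mul_nonneg hc q3
  simp only [Matrix.mulVec_sub, Matrix.sub_mulVec, Matrix.one_mulVec, dotProduct_sub,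
    sub_dotProduct, Matrix.neg_mulVec, dotProduct_neg] at q2 q3 q4
  rw [dot_mulVec_comm hSs u w, dotProduct_comm u w] at q4
  rw [dot_mulVec_comm hSs p w, dot_mulVec_comm hA p w] at q2
  rw [dot_mulVec_comm hSs m w, dot_mulVec_comm hA m w] at q3
  linarith

lemma fin_ne_succ {N : ℕ} [NeZero N] (hN : 3 ≤ N) (j : Fin N) : j ≠ j + 1 := by
  intro h
  have h1 : (1 : Fin N) = 0 := by simpa using h.symm
  have := congrArg Fin.val h1
  rw [Fin.val_one', Nat.mod_eq_of_lt (by omega)] at this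
  simp at this

lemma fin_pred_ne_succ {N : ℕ} [NeZero N] (hN : 3 ≤ N) (j : Fin N) : j - 1 ≠ j + 1 := by
  intro h
  have h1 : (1 : Fin N) + 1 = 0 := by
    have : j + (1 + 1) = j + 0 := by rw [← add_assoc, ← h]; simp
    exact add_left_cancel this
  have := congrArg Fin.val h1
  rw [Fin.val_add, Fin.val_one', Nat.mod_eq_of_lt (a := 1) (by omega),
    Nat.mod_eq_of_lt (by omega)] at this
  simp at this

lemma sum_Dx {N : ℕ} [NeZero N] (hN : 3 ≤ N) (d : ℝ) (g : Fin N → ℝ) (j : Fin N) :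
    ∑ i, Dx N d j i * g i = (g (j + 1) - g (j - 1)) / (2 * d) := by
  have h : ∀ i, Dx N d j i * g i = (if i = j + 1 then g i / (2 * d) else 0)
      - (if i = j - 1 then g i / (2 * d) else 0) := by
    intro i
    have e : j = i + 1 ↔ i = j - 1 := by rw [eq_sub_iff_add_eq, eq_comm]
    simp only [Dx, Matrix.of_apply, e]
    by_cases h1 : i = j + 1
    · have : i ≠ j - 1 := by rw [h1]; exact (fin_pred_ne_succ hN j).symm
      simp only [if_pos h1, if_neg this]; ring
    · by_cases h2 : i = j - 1
      · simp only [if_neg h1, if_pos h2]; ring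
      · simp only [if_neg h1, if_neg h2]; ring
  simp only [h, Finset.sum_sub_distrib, Finset.sum_ite_eq', Finset.mem_univ, if_true]
  ring

lemma sum_Dxx {N : ℕ} [NeZero N] (hN : 3 ≤ N) (d : ℝ) (g : Fin N → ℝ) (j : Fin N) :
    ∑ i, Dxx N d j i * g i = (g (j + 1) - 2 * g j + g (j - 1)) / (2 * d) := by
  have h : ∀ i, Dxx N d j i * g i = (if i = j + 1 then g i / (2 * d) else 0)
      - (if i = j then 2 * g i / (2 * d) else 0)
      + (if i = j - 1 then g i / (2 * d) else 0) := by
    intro i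
    have e : j = i + 1 ↔ i = j - 1 := by rw [eq_sub_iff_add_eq, eq_comm]
    simp only [Dxx, Matrix.of_apply, e]
    by_cases h0 : i = j
    · have h1 : i ≠ j + 1 := by rw [h0]; exact fin_ne_succ hN j
      have h2 : i ≠ j - 1 := by
        refine mt e.2 ?_; rw [h0]; exact fin_ne_succ hN j
      simp only [if_pos h0, if_neg h1, if_neg h2, mul_div_mul_left _ _ (two_ne_zero' ℝ)]; ring
    · by_cases h1 : i = j + 1
      · have : i ≠ j - 1 := by rw [h1]; exact (fin_pred_ne_succ hN j).symm
        simp only [if_neg h0, if_pos h1, if_neg this]; ring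
      · by_cases h2 : i = j - 1
        · simp only [if_neg h0, if_neg h1, if_pos h2]; ring
        · simp only [if_neg h0, if_neg h1, if_neg h2]; ring
  simp only [h, Finset.sum_add_distrib, Finset.sum_sub_distrib, Finset.sum_ite_eq',
    Finset.mem_univ, if_true]
  ring

/-- Energy decay of the implicit coupling between the zeroth moment and the temperature. -/
lemma absorption_zero {s u w b b0 : ℝ} (hs : 0 ≤ s) (h : u = w + s * (√2 * b - u))
    (hb : b = b0 + s * (√2 * u - 2 * b)) : u ^ 2 + b ^ 2 ≤ w ^ 2 + b0 ^ 2 := by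
  have h2 : √2 ^ 2 = (2 : ℝ) := Real.sq_sqrt (by norm_num)
  have hw : w = u - s * (√2 * b - u) := by linarith
  have hb0 : b0 = b - s * (√2 * u - 2 * b) := by linarith
  have e : w ^ 2 + b0 ^ 2 - u ^ 2 - b ^ 2
      = 2 * s * (u - √2 * b) ^ 2 + (s * (√2 * b - u)) ^ 2 + (s * (√2 * u - 2 * b)) ^ 2 := by
    rw [hw, hb0]
    linear_combination (-2 * s * b ^ 2) * h2
  have : 0 ≤ 2 * s * (u - √2 * b) ^ 2 := by positivity
  nlinarith [sq_nonneg (s * (√2 * b - u)), sq_nonneg (s * (√2 * u - 2 * b))]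

lemma absorption_pos {s u w : ℝ} (hs : 0 ≤ s) (h : u = w - s * u) : u ^ 2 ≤ w ^ 2 := by
  have hw : w = u + s * u := by linarith
  rw [hw]
  nlinarith [mul_nonneg hs (sq_nonneg u), sq_nonneg (s * u)]

/-- Energy stability of the conservative fully discrete multiplicative Su–Olson
scheme: under the hyperbolic CFL condition `Δt ≤ Δx` the total energy
`Eⁿ = ½‖Bⁿvⁿ‖_F² + ½‖Bⁿ‖²` does not increase, `E¹ ≤ E⁰`. -/
theorem stmt_12 (Nx Nμ : ℕ) [NeZero Nx] [NeZero Nμ] (hNx : 3 ≤ Nx)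
    (Δx Δt σ : ℝ) (hΔx : 0 < Δx) (hΔt : 0 < Δt) (hCFL : Δt ≤ Δx) (hσ : 0 ≤ σ)
    (A absA : Matrix (Fin Nμ) (Fin Nμ) ℝ) (hA : A.IsSymm)
    (hspec : ∀ μ ∈ spectrum ℝ A, μ ∈ Set.Icc (-1 : ℝ) 1)
    (habs : absA.PosSemidef) (habs2 : absA * absA = A * A)
    (B0 B1 : Fin Nx → ℝ) (hB0 : ∀ j, 0 < B0 j)
    (v0 v1 : Fin Nx → Fin Nμ → ℝ)
    (hscheme : ∀ j k, v1 j k = v0 j k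
        - Δt * ∑ i : Fin Nx, ∑ ℓ : Fin Nμ,
            (1 / B0 j) * Dx Nx Δx j i * B0 i * v0 i ℓ * A k ℓ
        + Δt * ∑ i : Fin Nx, ∑ ℓ : Fin Nμ,
            (1 / B0 j) * Dxx Nx Δx j i * B0 i * v0 i ℓ * absA k ℓ
        + σ * Δt * (B1 j / B0 j) * (Real.sqrt 2 * (if k = 0 then (1 : ℝ) else 0) - v1 j k)
        - ((B1 j - B0 j) / B0 j) * v1 j k)
    (hB : ∀ j, B1 j = B0 j + σ * Δt * B1 j * (Real.sqrt 2 * v1 j 0 - 2)) :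
    (1 / 2) * ∑ j : Fin Nx, ∑ k : Fin Nμ, (B1 j * v1 j k) ^ 2
        + (1 / 2) * ∑ j : Fin Nx, (B1 j) ^ 2
      ≤ (1 / 2) * ∑ j : Fin Nx, ∑ k : Fin Nμ, (B0 j * v0 j k) ^ 2
        + (1 / 2) * ∑ j : Fin Nx, (B0 j) ^ 2 := by
  classical
  set u : Fin Nx → Fin Nμ → ℝ := fun j k => B0 j * v0 j k with hu
  set c : ℝ := Δt / Δx with hc
  have hc0 : 0 ≤ c := by positivity
  have hc1 : c ≤ 1 := (div_le_one hΔx).2 hCFL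
  have hs : 0 ≤ σ * Δt := by positivity
  -- the result of the transport step alone
  set w : Fin Nx → Fin Nμ → ℝ := fun j => u j - (c / 2) • (A *ᵥ u (j + 1) - A *ᵥ u (j - 1))
      + (c / 2) • (absA *ᵥ u (j + 1) - (2 : ℝ) • absA *ᵥ u j + absA *ᵥ u (j - 1)) with hw
  have hsum : ∀ (D : Matrix (Fin Nx) (Fin Nx) ℝ) (M : Matrix (Fin Nμ) (Fin Nμ) ℝ) j k,
      ∑ i : Fin Nx, ∑ ℓ : Fin Nμ, (1 / B0 j) * D j i * B0 i * v0 i ℓ * M k ℓ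
        = (1 / B0 j) * ∑ i, D j i * (M *ᵥ u i) k := by
    intro D M j k
    simp only [Matrix.mulVec, dotProduct, Finset.mul_sum, hu]
    refine Finset.sum_congr rfl fun i _ => Finset.sum_congr rfl fun l _ => ?_
    ring
  have hu1 : ∀ j k, B1 j * v1 j k = w j k
      + σ * Δt * (√2 * (if k = 0 then (1 : ℝ) else 0) * B1 j - B1 j * v1 j k) := by
    intro j k
    have h := hscheme j k
    have hb := (hB0 j).ne'
    rw [hsum, hsum, sum_Dx hNx Δx (fun i => (A *ᵥ u i) k),
      sum_Dxx hNx Δx (fun i => (absA *ᵥ u i) k)] at h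
    have e : w j k = B0 j * v0 j k - Δt * (((A *ᵥ u (j + 1)) k - (A *ᵥ u (j - 1)) k) / (2 * Δx))
        + Δt * (((absA *ᵥ u (j + 1)) k - 2 * (absA *ᵥ u j) k + (absA *ᵥ u (j - 1)) k)
          / (2 * Δx)) := by
      simp only [hw, hu, hc, Pi.add_apply, Pi.sub_apply, Pi.smul_apply, smul_eq_mul]
      ring
    rw [e]
    generalize ((A *ᵥ u (j + 1)) k - (A *ᵥ u (j - 1)) k) / (2 * Δx) = X at h ⊢
    generalize ((absA *ᵥ u (j + 1)) k - 2 * (absA *ᵥ u j) k + (absA *ᵥ u (j - 1)) k)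
      / (2 * Δx) = Y at h ⊢
    generalize (if k = 0 then (1 : ℝ) else 0) = z at h ⊢
    field_simp at h
    linear_combination h
  have htrans : ∑ j, w j ⬝ᵥ w j ≤ ∑ j, u j ⬝ᵥ u j := by
    have shiftp : ∀ f : Fin Nx → ℝ, ∑ j, f (j + 1) = ∑ j, f j := fun f =>
      Equiv.sum_comp (Equiv.addRight (1 : Fin Nx)) f
    have shiftm : ∀ f : Fin Nx → ℝ, ∑ j, f (j - 1) = ∑ j, f j := fun f =>
      Equiv.sum_comp (Equiv.subRight (1 : Fin Nx)) f
    refine (Finset.sum_le_sum fun j _ => transport_pointwise hA hspec habs habs2 hc0 hc1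
      (u j) (u (j + 1)) (u (j - 1)) (w j) rfl).trans (le_of_eq ?_)
    rw [Finset.sum_add_distrib, Finset.sum_add_distrib,
      shiftp (fun j => c / 2 * (u j ⬝ᵥ absA *ᵥ u j - u j ⬝ᵥ A *ᵥ u j)),
      shiftm (fun j => c / 2 * (u j ⬝ᵥ absA *ᵥ u j + u j ⬝ᵥ A *ᵥ u j)),
      ← Finset.sum_add_distrib, ← Finset.sum_add_distrib]
    refine Finset.sum_congr rfl fun j _ => ?_
    ring
  have habsorb : ∀ j, ∑ k, (B1 j * v1 j k) ^ 2 + B1 j ^ 2 ≤ w j ⬝ᵥ w j + B0 j ^ 2 := by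
    intro j
    have h0 : (B1 j * v1 j 0) ^ 2 + B1 j ^ 2 ≤ w j 0 ^ 2 + B0 j ^ 2 := by
      refine absorption_zero hs ?_ ?_
      · have := hu1 j 0
        simpa using this
      · linear_combination hB j
    have h1 : ∑ k ∈ Finset.univ.erase (0 : Fin Nμ), (B1 j * v1 j k) ^ 2
        ≤ ∑ k ∈ Finset.univ.erase (0 : Fin Nμ), w j k ^ 2 := by
      refine Finset.sum_le_sum fun k hk => absorption_pos hs ?_
      have := hu1 j k
      rw [if_neg (Finset.ne_of_mem_erase hk)] at this
      linear_combination this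
    have e : w j ⬝ᵥ w j = ∑ k, w j k ^ 2 := by simp only [dotProduct, sq]
    rw [e, ← Finset.add_sum_erase _ _ (Finset.mem_univ (0 : Fin Nμ)),
      ← Finset.add_sum_erase _ (fun k => w j k ^ 2) (Finset.mem_univ (0 : Fin Nμ))]
    linarith
  have h := Finset.sum_le_sum fun j (_ : j ∈ Finset.univ) => habsorb j
  rw [Finset.sum_add_distrib, Finset.sum_add_distrib] at h
  have e : ∑ j, u j ⬝ᵥ u j = ∑ j, ∑ k, (B0 j * v0 j k) ^ 2 := by
    simp only [dotProduct, sq, hu]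
  linarith
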